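/- Let Ω₁, Ω₂ be open subsets of ℝⁿ and let f ∈ BV_loc(Ω₁, Ω₂) have no jump part. Suppose the operator T_f(u) = u∘f maps functions from C_c^∞(Ω₂) into BV_loc(Ω₁) and there is a constant K such that |D(u∘f)|(Ω₁) ≤ K·|Du|(Ω₂) for all u ∈ C_c^∞(Ω₂). Then |Df|(f̃⁻¹(A)) ≤ 16nK·Lⁿ(A) for all Borel sets A ⊆ Ω₂. -/

import Mathlib

open MeasureTheory Metric Set Filter
open scoped ENNReal Topology NNReal

noncomputable section

/-- `ℝⁿ` as a Euclidean space. -/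
abbrev En (n : ℕ) : Type := EuclideanSpace ℝ (Fin n)

/-- A smooth test function compactly supported inside the set `Ω`. -/
def SmoothTest {n : ℕ} (Ω : Set (En n)) (φ : En n → ℝ) : Prop :=
  ContDiff ℝ (⊤ : ℕ∞) φ ∧ HasCompactSupport φ ∧ tsupport φ ⊆ Ω

/-- Frobenius norm of an `m × n` array of reals. -/
def frobNorm {m n : ℕ} (M : Fin m → Fin n → ℝ) : ℝ :=
  Real.sqrt (∑ j, ∑ i, M j i ^ 2)

/-- `Df = σ ⬝ ν` is the polar decomposition of the distributional derivative of the
mapping `f : Ω → ℝᵐ`: `σ` is a matrix field of unit Frobenius norm `ν`-a.e., `ν` is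
carried by `Ω`, and the integration-by-parts formula holds against all smooth test
functions compactly supported in `Ω`.  In particular `ν = |Df|` is the total variation
measure of `Df` on `Ω`. -/
def IsVariationMeasure {n m : ℕ} (Ω : Set (En n)) (f : En n → En m)
    (σ : En n → Fin m → Fin n → ℝ) (ν : Measure (En n)) : Prop :=
  Measurable σ ∧ (∀ᵐ x ∂ν, frobNorm (σ x) = 1) ∧ ν Ωᶜ = 0 ∧
    ∀ φ : En n → ℝ, SmoothTest Ω φ → ∀ (j : Fin m) (i : Fin n),
      ∫ x in Ω, f x j * fderiv ℝ φ x (EuclideanSpace.single i 1) ∂volume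
        = - ∫ x, φ x * σ x j i ∂ν

/-- `f ∈ BV(Ω, ℝᵐ)` with total variation measure `ν`. -/
def MemBV {n m : ℕ} (Ω : Set (En n)) (f : En n → En m) (ν : Measure (En n)) : Prop :=
  IntegrableOn f Ω volume ∧ ν Ω < ⊤ ∧ ∃ σ, IsVariationMeasure Ω f σ ν

/-- `f ∈ BV_loc(Ω, ℝᵐ)` with total variation measure `ν`, finite on compact subsets of `Ω`. -/
def MemBVloc {n m : ℕ} (Ω : Set (En n)) (f : En n → En m) (ν : Measure (En n)) : Prop :=
  LocallyIntegrableOn f Ω volume ∧ (∀ C : Set (En n), IsCompact C → C ⊆ Ω → ν C < ⊤) ∧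
    ∃ σ, IsVariationMeasure Ω f σ ν

/-- Scalar version of `IsVariationMeasure`: `Du = σ ⬝ ν` with `|σ| = 1` `ν`-a.e. -/
def IsVariationMeasureS {n : ℕ} (Ω : Set (En n)) (u : En n → ℝ)
    (σ : En n → Fin n → ℝ) (ν : Measure (En n)) : Prop :=
  Measurable σ ∧ (∀ᵐ x ∂ν, Real.sqrt (∑ i, σ x i ^ 2) = 1) ∧ ν Ωᶜ = 0 ∧
    ∀ φ : En n → ℝ, SmoothTest Ω φ → ∀ i : Fin n,
      ∫ x in Ω, u x * fderiv ℝ φ x (EuclideanSpace.single i 1) ∂volume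
        = - ∫ x, φ x * σ x i ∂ν

/-- `u ∈ BV(Ω)` with total variation measure `ν`. -/
def MemBVs {n : ℕ} (Ω : Set (En n)) (u : En n → ℝ) (ν : Measure (En n)) : Prop :=
  IntegrableOn u Ω volume ∧ ν Ω < ⊤ ∧ ∃ σ, IsVariationMeasureS Ω u σ ν

/-- `u ∈ BV_loc(Ω)` with total variation measure `ν`. -/
def MemBVlocs {n : ℕ} (Ω : Set (En n)) (u : En n → ℝ) (ν : Measure (En n)) : Prop :=
  LocallyIntegrableOn u Ω volume ∧ (∀ C : Set (En n), IsCompact C → C ⊆ Ω → ν C < ⊤) ∧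
    ∃ σ, IsVariationMeasureS Ω u σ ν

/-- `z` is the approximate limit of `f` at `x`. -/
def ApproxLimAt {n m : ℕ} (f : En n → En m) (x : En n) (z : En m) : Prop :=
  Tendsto (fun r : ℝ =>
      (∫ y in Metric.ball x r, ‖f y - z‖ ∂volume) / (volume (Metric.ball x r)).toReal)
    (nhdsWithin 0 (Set.Ioi 0)) (nhds 0)

/-- `f̃⁻¹(A)`: the preimage of `A` under the precise representative (approximate limit)
of `f`; a point belongs to it iff the approximate limit of `f` exists there and lies in `A`. -/
def tildePreimage {n m : ℕ} (f : En n → En m) (A : Set (En m)) : Set (En n) :=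
  {x | ∃ z ∈ A, ApproxLimAt f x z}

/-- `f` has no jump part: its variation measure does not charge the approximate
discontinuity set of `f`. -/
def NoJumpPart {n m : ℕ} (f : En n → En m) (ν : Measure (En n)) : Prop :=
  ν {x | ¬ ∃ z, ApproxLimAt f x z} = 0

/-- `f` is a homeomorphism of `Ω₁` onto `Ω₂`, with inverse `g`. -/
def IsHomeoOn {n : ℕ} (f g : En n → En n) (Ω₁ Ω₂ : Set (En n)) : Prop :=
  ContinuousOn f Ω₁ ∧ ContinuousOn g Ω₂ ∧ MapsTo f Ω₁ Ω₂ ∧ MapsTo g Ω₂ Ω₁ ∧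
    (∀ x ∈ Ω₁, g (f x) = x) ∧ (∀ y ∈ Ω₂, f (g y) = y)

open scoped Convolution ContDiff

/-!
Mollifying `f` and passing to the limit at the points of approximate continuity, which carry
`|Df|`, gives the chain rule `D(u ∘ f) = ∇u(f̃) · Df`; hence `∫ |∇u(f̃) · Df| ≤ K ∫ |∇u|` for every
`u ∈ C_c^∞(Ω₂)`. Test this with the rapidly oscillating `u(y) = η(y) t⁻¹ sin(t yⱼ + a)`, where
`η ≥ 0`: its gradient is `η cos(t yⱼ + a) eⱼ` up to `O(t⁻¹)`, and since `|cos| + |sin| ≥ 1`, adding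
the estimates for the phases `a = 0` and `a = π / 2` and letting `t → ∞` bounds the integral of
`η(f̃)` against the `j`-th row of `|Df|` by `2 K ∫ η`. Summing over `j` gives
`∫ η(f̃) d|Df| ≤ 2 n K ∫ η`, and `η` may be replaced by indicators of Borel sets because the image
of `|Df|` under `f̃` and Lebesgue measure are regular.
-/

section Mollification

variable {E F G ι : Type*} [NormedAddCommGroup E] [NormedSpace ℝ E] [HasContDiffBump E]
  [FiniteDimensional ℝ E] [MeasurableSpace E] [BorelSpace E]
  [NormedAddCommGroup F] [NormedSpace ℝ F] [NormedAddCommGroup G] [NormedSpace ℝ G]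
  {μ : Measure E} [μ.IsAddHaarMeasure] {l : Filter ι} {C : ℝ}

lemma exists_seq_contDiffBump_tendsto_zero (E : Type*) [NormedAddCommGroup E] :
    ∃ φ : ℕ → ContDiffBump (0 : E),
      Tendsto (fun k => (φ k).rOut) atTop (𝓝 0) ∧ ∀ k, (φ k).rOut ≤ 2 * (φ k).rIn := by
  have hpos (k : ℕ) : (0 : ℝ) < 1 / (k + 1) := Nat.one_div_pos_of_nat
  exact ⟨fun k => ⟨1 / (k + 1) / 2, 1 / (k + 1), half_pos (hpos k), half_lt_self (hpos k)⟩,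
    tendsto_one_div_add_atTop_nhds_zero_nat, fun k => (mul_div_cancel₀ _ two_ne_zero).ge⟩

lemma normed_sub_comm {E : Type*} [NormedAddCommGroup E] [NormedSpace ℝ E] [HasContDiffBump E]
    [MeasurableSpace E] {μ : Measure E} (φ : ContDiffBump (0 : E)) (x y : E) :
    φ.normed μ (x - y) = φ.normed μ (y - x) := by
  rw [← neg_sub, φ.normed_neg]

/-- The mollification of `g` by the normalized smooth bump `φ`, which is the standard smooth
approximation of a locally integrable function. -/
def mollify (φ : ContDiffBump (0 : E)) (μ : Measure E) (g : E → F) : E → F :=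
  φ.normed μ ⋆[ContinuousLinearMap.lsmul ℝ ℝ, μ] g

lemma mollify_apply (φ : ContDiffBump (0 : E)) (g : E → F) (x : E) :
    mollify φ μ g x = ∫ w, φ.normed μ (x - w) • g w ∂μ := by
  rw [mollify, convolution_eq_swap]
  rfl

lemma contDiff_mollify (φ : ContDiffBump (0 : E)) {g : E → F} (hg : LocallyIntegrable g μ) :
    ContDiff ℝ ∞ (mollify φ μ g) :=
  φ.hasCompactSupport_normed.contDiff_convolution_left _ φ.contDiff_normed hg

lemma dist_mollify_le [CompleteSpace F] (φ : ContDiffBump (0 : E)) {g : E → F}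
    (hg : AEStronglyMeasurable g μ) {x : E} {z : F} {ε : ℝ} (hε : 0 ≤ ε)
    (h : ∀ y ∈ ball x φ.rOut, dist (g y) z ≤ ε) :
    dist (mollify φ μ g x) z ≤ ε :=
  dist_convolution_le hε φ.support_normed_eq.subset φ.nonneg_normed φ.integral_normed hg h

lemma fderiv_mollify_apply (φ : ContDiffBump (0 : E)) {g : E → F} (hg : LocallyIntegrable g μ)
    (x v : E) :
    fderiv ℝ (mollify φ μ g) x v = ∫ w, fderiv ℝ (φ.normed μ) (x - w) v • g w ∂μ := by
  have hφ : HasCompactSupport (φ.normed μ) := φ.hasCompactSupport_normed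
  have hderiv := hφ.hasFDerivAt_convolution_left (ContinuousLinearMap.lsmul ℝ ℝ)
    (φ.contDiff_normed (n := 1)) hg x
  have hint := ((hφ.fderiv ℝ).convolutionExists_left
    ((ContinuousLinearMap.lsmul ℝ ℝ).precompL E)
    (φ.contDiff_normed.continuous_fderiv one_ne_zero) hg x).integrable_swap
  rw [mollify, hderiv.fderiv, convolution_eq_swap, ContinuousLinearMap.integral_apply hint]
  rfl

lemma normed_le_div_measure_ball_two_mul_rOut (φ : ContDiffBump (0 : E))
    (hC : φ.rOut ≤ C * φ.rIn) (x y : E) :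
    φ.normed μ y ≤ (2 * C) ^ Module.finrank ℝ E / μ.real (ball x (2 * φ.rOut)) := by
  have hball : μ.real (ball x (2 * φ.rOut)) =
      2 ^ Module.finrank ℝ E * μ.real (closedBall 0 φ.rOut) := by
    rw [Measure.addHaar_real_closedBall _ _ φ.rOut_pos.le, measureReal_def,
      Measure.addHaar_ball_of_pos _ _ (mul_pos two_pos φ.rOut_pos), ENNReal.toReal_mul,
      ENNReal.toReal_ofReal (by have := φ.rOut_pos; positivity), mul_pow, mul_assoc,
      measureReal_def]
  rw [hball, mul_pow, mul_div_mul_left _ _ (by positivity)]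
  exact φ.normed_le_div_measure_closedBall_rOut μ C hC y

lemma tendsto_mollify_of_tendsto_average [CompleteSpace F] {φ : ι → ContDiffBump (0 : E)}
    (hφ : Tendsto (fun i => (φ i).rOut) l (𝓝 0)) (hC : ∀ i, (φ i).rOut ≤ C * (φ i).rIn)
    {g : E → F} (hg : LocallyIntegrable g μ) {x : E} {z : F}
    (hz : Tendsto (fun r => ⨍ w in ball x r, ‖g w - z‖ ∂μ) (𝓝[>] 0) (𝓝 0))
    {p : ι → E} (hp : ∀ᶠ i in l, p i ∈ ball x (φ i).rOut) :
    Tendsto (fun i => mollify (φ i) μ g (p i)) l (𝓝 z) := by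
  have hrad : Tendsto (fun i => 2 * (φ i).rOut) l (𝓝[>] 0) :=
    tendsto_nhdsWithin_iff.2 ⟨by simpa using hφ.const_mul 2,
      .of_forall fun i => mul_pos two_pos (φ i).rOut_pos⟩
  simp only [mollify_apply]
  refine tendsto_integral_smul_of_tendsto_average_norm_sub ((2 * C) ^ Module.finrank ℝ E)
    (hz.comp hrad) (.of_forall fun i => (hg.integrableOn_isCompact
      (isCompact_closedBall x _)).mono_set ball_subset_closedBall) ?_ ?_ (.of_forall fun i w => ?_)
  · simp only [integral_sub_left_eq_self ((φ _).normed μ) μ, ContDiffBump.integral_normed,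
      tendsto_const_nhds]
  · filter_upwards [hp] with i hi w hw
    have hw' : p i - w ∈ ball 0 (φ i).rOut := (φ i).support_normed_eq (μ := μ) ▸ hw
    rw [mem_ball_zero_iff, ← dist_eq_norm, dist_comm] at hw'
    calc dist w x ≤ dist w (p i) + dist (p i) x := dist_triangle _ _ _
      _ < (φ i).rOut + (φ i).rOut := add_lt_add hw' hi
      _ = 2 * (φ i).rOut := (two_mul _).symm
  · rw [abs_of_nonneg ((φ i).nonneg_normed _)]
    exact normed_le_div_measure_ball_two_mul_rOut (φ i) (hC i) x _

lemma eventually_forall_mem_ball_dist_mollify_lt [CompleteSpace F] {φ : ι → ContDiffBump (0 : E)}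
    (hφ : Tendsto (fun i => (φ i).rOut) l (𝓝 0)) (hC : ∀ i, (φ i).rOut ≤ C * (φ i).rIn)
    {g : E → F} (hg : LocallyIntegrable g μ) {x : E} {z : F}
    (hz : Tendsto (fun r => ⨍ w in ball x r, ‖g w - z‖ ∂μ) (𝓝[>] 0) (𝓝 0))
    {ε : ℝ} (hε : 0 < ε) :
    ∀ᶠ i in l, ∀ y ∈ ball x (φ i).rOut, dist (mollify (φ i) μ g y) z < ε := by
  have hlim := tendsto_mollify_of_tendsto_average (φ := fun q : ι × E => φ q.1)
    (l := comap Prod.fst l ⊓ 𝓟 {q | q.2 ∈ ball x (φ q.1).rOut}) (p := Prod.snd)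
    (hφ.comp (tendsto_comap.mono_left inf_le_left)) (fun q => hC q.1) hg hz
    (mem_inf_of_right (mem_principal_self _))
  have hev := eventually_inf_principal.1 (Metric.tendsto_nhds.1 hlim ε hε)
  filter_upwards [eventually_comap.1 hev] with i hi y hy using hi (i, y) rfl hy

/-- At a point `y` where `g` has an approximate limit, the smooth approximations of `g` converge
uniformly on the balls that carry the mollifier, so mollifying twice is harmless. -/
lemma tendsto_mollify_comp_mollify [CompleteSpace F] [CompleteSpace G]
    {φ : ι → ContDiffBump (0 : E)}
    (hφ : Tendsto (fun i => (φ i).rOut) l (𝓝 0)) (hC : ∀ i, (φ i).rOut ≤ C * (φ i).rIn)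
    {g : E → F} (hg : LocallyIntegrable g μ) {y : E} {z : F}
    (hz : Tendsto (fun r => ⨍ w in ball y r, ‖g w - z‖ ∂μ) (𝓝[>] 0) (𝓝 0))
    {A : E × F → G} (hA : Continuous A) :
    Tendsto (fun i => mollify (φ i) μ (fun x => A (x, mollify (φ i) μ g x)) y) l
      (𝓝 (A (y, z))) := by
  refine Metric.tendsto_nhds.2 fun ε hε => ?_
  obtain ⟨δ, hδ, hAδ⟩ := Metric.continuous_iff.1 hA (y, z) (ε / 2) (half_pos hε)
  filter_upwards [eventually_forall_mem_ball_dist_mollify_lt hφ hC hg hz hδ,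
    hφ.eventually_lt_const hδ] with i hclose hrad
  have hcont : Continuous fun x => A (x, mollify (φ i) μ g x) :=
    hA.comp (continuous_id.prodMk (contDiff_mollify (φ i) hg).continuous)
  refine (dist_mollify_le (φ i) hcont.aestronglyMeasurable (half_pos hε).le
    fun x hx => (hAδ _ ?_).le).trans_lt (half_lt_self hε)
  exact max_lt ((mem_ball.1 hx).trans hrad) (hclose x hx)

lemma integral_apply_integral_normed_smul [CompleteSpace F] (φ : ContDiffBump (0 : E))
    {A : E → F →L[ℝ] ℝ} (hA : Continuous A) (hAc : HasCompactSupport A)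
    {ν : Measure E} [SFinite ν] {c : E → F} (hc : Integrable c ν) :
    ∫ x, A x (∫ y, φ.normed μ (x - y) • c y ∂ν) ∂μ = ∫ y, mollify φ μ A y (c y) ∂ν := by
  have hφ : Continuous (φ.normed μ) := φ.continuous_normed
  obtain ⟨M, hM⟩ := hφ.bounded_above_of_compact_support φ.hasCompactSupport_normed
  have hinner (x : E) : Integrable (fun y => φ.normed μ (x - y) • c y) ν :=
    hc.bdd_smul M (by fun_prop) (ae_of_all _ fun y => hM _)
  have hAint : Integrable A μ := hA.integrable_of_hasCompactSupport hAc
  have houter (y : E) : Integrable (fun x => φ.normed μ (y - x) • A x) μ :=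
    hAint.bdd_smul M (by fun_prop) (ae_of_all _ fun x => hM _)
  have hprod : Integrable (fun q : E × E => φ.normed μ (q.1 - q.2) • A q.1 (c q.2)) (μ.prod ν) := by
    refine Integrable.bdd_smul ?_ M (by fun_prop) (ae_of_all _ fun q => hM _)
    refine (hAint.norm.mul_prod hc.norm).mono ?_ (ae_of_all _ fun q => ?_)
    · exact isBoundedBilinearMap_apply.continuous.comp_aestronglyMeasurable
        ((hA.comp continuous_fst).aestronglyMeasurable.prodMk hc.aestronglyMeasurable.comp_snd)
    · rw [norm_mul, norm_norm, norm_norm]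
      exact (A q.1).le_opNorm _
  calc ∫ x, A x (∫ y, φ.normed μ (x - y) • c y ∂ν) ∂μ
      = ∫ x, ∫ y, φ.normed μ (x - y) • A x (c y) ∂ν ∂μ := by
        simp only [← (A _).integral_comp_comm (hinner _), map_smul]
    _ = ∫ y, ∫ x, φ.normed μ (x - y) • A x (c y) ∂μ ∂ν := integral_integral_swap hprod
    _ = ∫ y, mollify φ μ A y (c y) ∂ν := by
        simp only [mollify_apply, ContinuousLinearMap.integral_apply (houter _), smul_apply,
          normed_sub_comm φ]

lemma tendsto_integral_comp_mollify_mul [CompleteSpace F] [l.IsCountablyGenerated]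
    {φ : ι → ContDiffBump (0 : E)} (hφ : Tendsto (fun i => (φ i).rOut) l (𝓝 0))
    (hC : ∀ i, (φ i).rOut ≤ C * (φ i).rIn) {g : E → F} (hg : LocallyIntegrable g μ)
    {u : F → ℝ} (hu : Continuous u) {B : ℝ} (hB : ∀ z, ‖u z‖ ≤ B)
    {w : E → ℝ} (hw : Integrable w μ) :
    Tendsto (fun i => ∫ x, u (mollify (φ i) μ g x) * w x ∂μ) l (𝓝 (∫ x, u (g x) * w x ∂μ)) := by
  refine tendsto_integral_filter_of_dominated_convergence (fun x => B * ‖w x‖)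
    (.of_forall fun i => ?_) (.of_forall fun i => ae_of_all _ fun x => ?_) (hw.norm.const_mul B) ?_
  · exact (hu.comp (contDiff_mollify (φ i) hg).continuous).aestronglyMeasurable.mul
      hw.aestronglyMeasurable
  · rw [norm_mul]
    exact mul_le_mul_of_nonneg_right (hB _) (norm_nonneg _)
  · filter_upwards [ContDiffBump.ae_convolution_tendsto_right_of_locallyIntegrable hφ
      (.of_forall hC) hg] with x hx
    exact ((hu.tendsto _).comp hx).mul_const _

lemma tendsto_integral_mollify_comp_mollify_apply [CompleteSpace F] [l.IsCountablyGenerated]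
    {φ : ι → ContDiffBump (0 : E)} (hφ : Tendsto (fun i => (φ i).rOut) l (𝓝 0))
    (hC : ∀ i, (φ i).rOut ≤ C * (φ i).rIn) {g : E → F} (hg : LocallyIntegrable g μ)
    {ν : Measure E} {z : E → F}
    (hz : ∀ᵐ y ∂ν, Tendsto (fun r => ⨍ w in ball y r, ‖g w - z y‖ ∂μ) (𝓝[>] 0) (𝓝 0))
    {A : E × F → G →L[ℝ] ℝ} (hA : Continuous A) {B : ℝ} (hB : ∀ q, ‖A q‖ ≤ B)
    {c : E → G} (hc : Integrable c ν) :
    Tendsto (fun i => ∫ y, mollify (φ i) μ (fun x => A (x, mollify (φ i) μ g x)) y (c y) ∂ν) l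
      (𝓝 (∫ y, A (y, z y) (c y) ∂ν)) := by
  have hcont (i : ι) : Continuous fun x => A (x, mollify (φ i) μ g x) :=
    hA.comp (continuous_id.prodMk (contDiff_mollify (φ i) hg).continuous)
  have hB0 : 0 ≤ B := (norm_nonneg _).trans (hB 0)
  refine tendsto_integral_filter_of_dominated_convergence (fun y => B * ‖c y‖)
    (.of_forall fun i => ?_) (.of_forall fun i => ae_of_all _ fun y => ?_) (hc.norm.const_mul B) ?_
  · exact isBoundedBilinearMap_apply.continuous.comp_aestronglyMeasurable
      ((contDiff_mollify (φ i) (hcont i).locallyIntegrable).continuous.aestronglyMeasurable.prodMk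
        hc.aestronglyMeasurable)
  · refine ContinuousLinearMap.le_of_opNorm_le _ ?_ _
    rw [← dist_zero_right]
    exact dist_mollify_le (φ i) (hcont i).aestronglyMeasurable hB0
      fun x _ => (dist_zero_right _).trans_le (hB _)
  · filter_upwards [hz] with y hy
    exact ((ContinuousLinearMap.apply ℝ ℝ (c y)).continuous.tendsto _).comp
      (tendsto_mollify_comp_mollify hφ hC hg hy hA)

end Mollification

section MatrixFields

variable {m n : ℕ} {M : Fin m → Fin n → ℝ}

/-- The `i`-th column of `M`, as a vector of `ℝᵐ`. -/
def col (M : Fin m → Fin n → ℝ) (i : Fin n) : En m :=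
  WithLp.toLp 2 fun j => M j i

/-- The covector `ℓ ∘ M`, written as the vector of its components: the density of `D(u ∘ f)`
is `covecMul M ℓ` when that of `Df` is `M` and `ℓ` is the derivative of `u`. -/
def covecMul (M : Fin m → Fin n → ℝ) : (En m →L[ℝ] ℝ) →ₗ[ℝ] En n where
  toFun ℓ := WithLp.toLp 2 fun i => ℓ (col M i)
  map_add' _ _ := rfl
  map_smul' _ _ := rfl

@[simp] lemma col_apply (i : Fin n) (j : Fin m) : col M i j = M j i := rfl

@[simp] lemma covecMul_apply (ℓ : En m →L[ℝ] ℝ) (i : Fin n) : covecMul M ℓ i = ℓ (col M i) := rfl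

lemma frobNorm_nonneg : 0 ≤ frobNorm M := Real.sqrt_nonneg _

lemma frobNorm_sq : frobNorm M ^ 2 = ∑ j, ∑ i, M j i ^ 2 :=
  Real.sq_sqrt (Finset.sum_nonneg fun _ _ => Finset.sum_nonneg fun _ _ => sq_nonneg _)

lemma sum_norm_col_sq : ∑ i, ‖col M i‖ ^ 2 = frobNorm M ^ 2 := by
  simp only [frobNorm_sq, EuclideanSpace.norm_sq_eq, Real.norm_eq_abs, sq_abs]
  exact Finset.sum_comm

lemma norm_col_le_frobNorm (i : Fin n) : ‖col M i‖ ≤ frobNorm M := by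
  refine le_of_sq_le_sq ?_ frobNorm_nonneg
  rw [← sum_norm_col_sq]
  exact Finset.single_le_sum (f := fun i => ‖col M i‖ ^ 2) (fun _ _ => sq_nonneg _)
    (Finset.mem_univ i)

lemma norm_covecMul_le (ℓ : En m →L[ℝ] ℝ) : ‖covecMul M ℓ‖ ≤ ‖ℓ‖ * frobNorm M := by
  refine le_of_sq_le_sq ?_ (mul_nonneg (norm_nonneg ℓ) frobNorm_nonneg)
  rw [EuclideanSpace.norm_sq_eq, mul_pow, ← sum_norm_col_sq, Finset.mul_sum]
  gcongr with i
  rw [← mul_pow]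
  gcongr
  exact ℓ.le_opNorm _

lemma frobNorm_le_sum_norm_covecMul_proj :
    frobNorm M ≤ ∑ j, ‖covecMul M (EuclideanSpace.proj j)‖ := by
  have hnn : ∀ j ∈ Finset.univ, 0 ≤ ‖covecMul M (EuclideanSpace.proj j)‖ :=
    fun j _ => norm_nonneg _
  refine le_of_sq_le_sq ?_ (Finset.sum_nonneg hnn)
  calc frobNorm M ^ 2 = ∑ j, ‖covecMul M (EuclideanSpace.proj j)‖ ^ 2 := by
        simp only [frobNorm_sq, EuclideanSpace.norm_sq_eq, Real.norm_eq_abs, sq_abs]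
        rfl
    _ ≤ _ := Finset.sum_sq_le_sq_sum_of_nonneg hnn

variable {α : Type*} [MeasurableSpace α] {σ : α → Fin m → Fin n → ℝ} {ν : Measure α}

lemma measurable_col (hσ : Measurable σ) (i : Fin n) : Measurable fun y => col (σ y) i :=
  (WithLp.measurable_toLp 2 _).comp (by fun_prop)

lemma measurable_covecMul (hσ : Measurable σ) {ℓ : α → En m →L[ℝ] ℝ} (hℓ : Measurable ℓ) :
    Measurable fun y => covecMul (σ y) (ℓ y) :=
  (WithLp.measurable_toLp 2 _).comp <| measurable_pi_lambda _ fun i =>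
    isBoundedBilinearMap_apply.continuous.measurable.comp (hℓ.prodMk (measurable_col hσ i))

variable [IsFiniteMeasure ν]

lemma integrable_col (hσ : Measurable σ) (h1 : ∀ᵐ y ∂ν, frobNorm (σ y) = 1) (i : Fin n) :
    Integrable (fun y => col (σ y) i) ν :=
  .of_bound (measurable_col hσ i).aestronglyMeasurable 1 <|
    h1.mono fun _ hy => hy ▸ norm_col_le_frobNorm i

lemma integrable_covecMul (hσ : Measurable σ) (h1 : ∀ᵐ y ∂ν, frobNorm (σ y) = 1)
    {ℓ : α → En m →L[ℝ] ℝ} (hℓ : Measurable ℓ) {C : ℝ} (hC : ∀ y, ‖ℓ y‖ ≤ C) :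
    Integrable (fun y => covecMul (σ y) (ℓ y)) ν := by
  refine .of_bound (measurable_covecMul hσ hℓ).aestronglyMeasurable C (h1.mono fun y hy => ?_)
  simpa [hy] using (norm_covecMul_le (M := σ y) (ℓ y)).trans
    (mul_le_mul_of_nonneg_right (hC y) frobNorm_nonneg)

end MatrixFields

section ChainRule

variable {m n : ℕ} {U : Set (En n)} {φ : En n → ℝ}

lemma SmoothTest.continuous_fderiv (hφ : SmoothTest U φ) : Continuous (fderiv ℝ φ) :=
  hφ.1.continuous_fderiv (by simp)

lemma SmoothTest.exists_norm_le (hφ : SmoothTest U φ) : ∃ C, ∀ x, ‖φ x‖ ≤ C :=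
  hφ.1.continuous.bounded_above_of_compact_support hφ.2.1

lemma SmoothTest.exists_norm_fderiv_le (hφ : SmoothTest U φ) : ∃ C, ∀ x, ‖fderiv ℝ φ x‖ ≤ C :=
  hφ.continuous_fderiv.bounded_above_of_compact_support (hφ.2.1.fderiv ℝ)

lemma SmoothTest.mono {V : Set (En n)} (hφ : SmoothTest U φ) (hUV : U ⊆ V) : SmoothTest V φ :=
  ⟨hφ.1, hφ.2.1, hφ.2.2.trans hUV⟩

lemma SmoothTest.setIntegral_mul (hφ : SmoothTest U φ) (g : En n → ℝ) (μ : Measure (En n)) :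
    ∫ x in U, φ x * g x ∂μ = ∫ x, φ x * g x ∂μ :=
  setIntegral_eq_integral_of_forall_compl_eq_zero fun x hx => by
    rw [image_eq_zero_of_notMem_tsupport fun h => hx (hφ.2.2 h), zero_mul]

lemma SmoothTest.setIntegral_mul_fderiv (hφ : SmoothTest U φ) (g : En n → ℝ) (v : En n) :
    ∫ x in U, g x * fderiv ℝ φ x v = ∫ x, g x * fderiv ℝ φ x v :=
  setIntegral_eq_integral_of_forall_compl_eq_zero fun x hx => by
    rw [fderiv_of_notMem_tsupport ℝ fun h => hx (hφ.2.2 h), zero_apply, mul_zero]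

lemma smoothTest_normed_sub (φ : ContDiffBump (0 : En n)) {x : En n}
    (hx : closedBall x φ.rOut ⊆ U) : SmoothTest U fun w => φ.normed volume (x - w) := by
  have hsupp : Function.support (fun w => φ.normed volume (x - w)) ⊆ closedBall x φ.rOut := by
    intro w hw
    have hw' : x - w ∈ ball 0 φ.rOut := φ.support_normed_eq (μ := volume) ▸ hw
    rw [mem_ball_zero_iff, ← dist_eq_norm, dist_comm] at hw'
    exact hw'.le
  exact ⟨φ.contDiff_normed.comp (contDiff_const.sub contDiff_id),
    .of_support_subset_isCompact (isCompact_closedBall x _) hsupp,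
    (closure_minimal hsupp isClosed_closedBall).trans hx⟩

lemma ApproxLimAt.tendsto_average_indicator {f : En n → En m} {y : En n} {z : En m}
    (h : ApproxLimAt f y z) (hU : IsOpen U) (hy : y ∈ U) :
    Tendsto (fun r => ⨍ w in ball y r, ‖U.indicator f w - z‖) (𝓝[>] 0) (𝓝 0) := by
  obtain ⟨ε, hε, hball⟩ := Metric.isOpen_iff.1 hU y hy
  refine h.congr' ?_
  filter_upwards [Ioo_mem_nhdsGT hε] with r hr
  rw [setAverage_eq, smul_eq_mul, ← div_eq_inv_mul, measureReal_def]
  congr 1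
  refine setIntegral_congr_fun measurableSet_ball fun w hw => ?_
  rw [indicator_of_mem (hball (ball_subset_ball hr.2.le hw))]

variable {f : En n → En m} {σ : En n → Fin m → Fin n → ℝ} {ν : Measure (En n)}
  [IsFiniteMeasure ν] {u : En m → ℝ} {ψ : En n → ℝ}

lemma IsVariationMeasure.integral_fderiv_smul (hν : IsVariationMeasure U f σ ν)
    (hf : IntegrableOn f U) (hφ : SmoothTest U φ) (i : Fin n) :
    ∫ x in U, fderiv ℝ φ x (EuclideanSpace.single i 1) • f x =
      -∫ x, φ x • col (σ x) i ∂ν := by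
  obtain ⟨C, hC⟩ := hφ.exists_norm_le
  obtain ⟨C', hC'⟩ := hφ.exists_norm_fderiv_le
  have hleft : IntegrableOn (fun x => fderiv ℝ φ x (EuclideanSpace.single i 1) • f x) U :=
    hf.bdd_smul C' (hφ.continuous_fderiv.clm_apply continuous_const).aestronglyMeasurable
      (ae_of_all _ fun x => by
        simpa using ContinuousLinearMap.le_of_opNorm_le _ (hC' x) (EuclideanSpace.single i 1))
  have hright : Integrable (fun x => φ x • col (σ x) i) ν :=
    (integrable_col hν.1 hν.2.1 i).bdd_smul C hφ.1.continuous.aestronglyMeasurable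
      (ae_of_all _ hC)
  ext j
  rw [eval_integral_piLp hleft.eval_piLp, PiLp.neg_apply, eval_integral_piLp hright.eval_piLp]
  simpa [mul_comm] using hν.2.2.2 φ hφ j i

lemma IsVariationMeasure.fderiv_mollify_indicator (hν : IsVariationMeasure U f σ ν)
    (hU : MeasurableSet U) (hf : IntegrableOn f U) (φ : ContDiffBump (0 : En n)) {x : En n}
    (hx : closedBall x φ.rOut ⊆ U) (i : Fin n) :
    fderiv ℝ (mollify φ volume (U.indicator f)) x (EuclideanSpace.single i 1) =
      ∫ y, φ.normed volume (x - y) • col (σ y) i ∂ν := by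
  have hderiv (w v : En n) : fderiv ℝ (fun w => φ.normed volume (x - w)) w v =
      -fderiv ℝ (φ.normed volume) (x - w) v := by
    have hφ : DifferentiableAt ℝ (φ.normed volume) (x - w) :=
      (φ.contDiff_normed (n := 1)).differentiable one_ne_zero _
    have hcomp : HasFDerivAt (fun w => φ.normed volume (x - w)) _ w :=
      hφ.hasFDerivAt.comp w ((hasFDerivAt_id w).const_sub x)
    simp [hcomp.fderiv]
  calc fderiv ℝ (mollify φ volume (U.indicator f)) x (EuclideanSpace.single i 1)
      = ∫ w in U, fderiv ℝ (φ.normed volume) (x - w) (EuclideanSpace.single i 1) • f w := by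
        rw [fderiv_mollify_apply φ (hf.integrable_indicator hU).locallyIntegrable,
          ← integral_indicator hU]
        simp only [indicator_smul_apply]
    _ = -∫ w in U, fderiv ℝ (fun w => φ.normed volume (x - w)) w (EuclideanSpace.single i 1) •
          f w := by
        simp only [hderiv, neg_smul, integral_neg, neg_neg]
    _ = ∫ y, φ.normed volume (x - y) • col (σ y) i ∂ν := by
        rw [hν.integral_fderiv_smul hf (smoothTest_normed_sub φ hx), neg_neg]

/-- The derivative of the mollified `f` is the mollification of `Df`, and this mollification is
moved from the measure `Df` onto the test field. -/
lemma IsVariationMeasure.integral_comp_mollify_mul_fderiv (hν : IsVariationMeasure U f σ ν)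
    (hU : MeasurableSet U) (hf : IntegrableOn f U) (hu : ContDiff ℝ 1 u) (hψ : SmoothTest U ψ)
    (φ : ContDiffBump (0 : En n)) (hφ : ∀ x ∈ tsupport ψ, closedBall x φ.rOut ⊆ U) (i : Fin n) :
    ∫ x, u (mollify φ volume (U.indicator f) x) * fderiv ℝ ψ x (EuclideanSpace.single i 1) =
      -∫ y, mollify φ volume (fun x => ψ x • fderiv ℝ u (mollify φ volume (U.indicator f) x)) y
        (col (σ y) i) ∂ν := by
  set g := mollify φ volume (U.indicator f)
  set e : En n := EuclideanSpace.single i 1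
  have hg : ContDiff ℝ 1 g :=
    (contDiff_mollify φ (hf.integrable_indicator hU).locallyIntegrable).of_le (by simp)
  have hug : ContDiff ℝ 1 (fun x => u (g x)) := hu.comp hg
  have hψ1 : ContDiff ℝ 1 ψ := hψ.1.of_le (by simp)
  have hdψ : Continuous fun x => fderiv ℝ ψ x e :=
    hψ.continuous_fderiv.clm_apply continuous_const
  have hdug : Continuous fun x => fderiv ℝ (fun x => u (g x)) x e :=
    (hug.continuous_fderiv one_ne_zero).clm_apply continuous_const
  have hA : Continuous fun x => ψ x • fderiv ℝ u (g x) :=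
    hψ1.continuous.smul ((hu.continuous_fderiv one_ne_zero).comp hg.continuous)
  have hchain (x : En n) : fderiv ℝ (fun x => u (g x)) x e * ψ x =
      (ψ x • fderiv ℝ u (g x)) (∫ y, φ.normed volume (x - y) • col (σ y) i ∂ν) := by
    by_cases hx : x ∈ tsupport ψ
    · rw [← hν.fderiv_mollify_indicator hU hf φ (hφ x hx) i,
        fderiv_fun_comp x (hu.differentiable one_ne_zero _) (hg.differentiable one_ne_zero x)]
      exact mul_comm _ _
    · simp [image_eq_zero_of_notMem_tsupport hx]
  calc ∫ x, u (g x) * fderiv ℝ ψ x e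
      = -∫ x, fderiv ℝ (fun x => u (g x)) x e * ψ x :=
        integral_mul_fderiv_eq_neg_fderiv_mul_of_integrable
          ((hdug.mul hψ1.continuous).integrable_of_hasCompactSupport hψ.2.1.mul_left)
          ((hug.continuous.mul hdψ).integrable_of_hasCompactSupport
            (hψ.2.1.fderiv_apply ℝ e).mul_left)
          ((hug.continuous.mul hψ1.continuous).integrable_of_hasCompactSupport hψ.2.1.mul_left)
          (fun x _ => hug.differentiable one_ne_zero x)
          (fun x _ => hψ1.differentiable one_ne_zero x)
    _ = _ := by
        simp only [hchain]
        rw [integral_apply_integral_normed_smul φ hA hψ.2.1.smul_right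
          (integrable_col hν.1 hν.2.1 i)]

/-- The chain rule `D(u ∘ f) = ∇u(f̃) · Df` for `f` without jump part. -/
lemma IsVariationMeasure.integral_comp_mul_fderiv (hν : IsVariationMeasure U f σ ν)
    (hU : IsOpen U) (hf : IntegrableOn f U) {F : En n → En m}
    (hF : ∀ᵐ y ∂ν, ApproxLimAt f y (F y)) (hu : ContDiff ℝ 1 u) {C C' : ℝ}
    (hC : ∀ z, ‖u z‖ ≤ C) (hC' : ∀ z, ‖fderiv ℝ u z‖ ≤ C') (hψ : SmoothTest U ψ) (i : Fin n) :
    ∫ x in U, u (f x) * fderiv ℝ ψ x (EuclideanSpace.single i 1) =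
      -∫ y, ψ y * covecMul (σ y) (fderiv ℝ u (F y)) i ∂ν := by
  obtain ⟨φ, hφ, hφ2⟩ := exists_seq_contDiffBump_tendsto_zero (En n)
  have hg : LocallyIntegrable (U.indicator f) :=
    (hf.integrable_indicator hU.measurableSet).locallyIntegrable
  have hball : ∀ᶠ k in atTop, ∀ x ∈ tsupport ψ, closedBall x (φ k).rOut ⊆ U := by
    obtain ⟨δ, hδ, hδU⟩ := IsCompact.exists_cthickening_subset_open hψ.2.1 hU hψ.2.2
    filter_upwards [hφ.eventually_le_const hδ] with k hk x hx
    exact (closedBall_subset_cthickening hx _).trans ((cthickening_mono hk _).trans hδU)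
  have hdψ : Integrable fun x => fderiv ℝ ψ x (EuclideanSpace.single i 1) :=
    (hψ.continuous_fderiv.clm_apply continuous_const).integrable_of_hasCompactSupport
      (hψ.2.1.fderiv_apply ℝ _)
  have hleft := tendsto_integral_comp_mollify_mul hφ hφ2 hg hu.continuous hC hdψ
  have hA : Continuous fun q : En n × En m => ψ q.1 • fderiv ℝ u q.2 :=
    (hψ.1.continuous.comp continuous_fst).smul
      ((hu.continuous_fderiv one_ne_zero).comp continuous_snd)
  obtain ⟨B, hB⟩ := hψ.exists_norm_le
  have hAB (q : En n × En m) : ‖ψ q.1 • fderiv ℝ u q.2‖ ≤ B * C' :=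
    (norm_smul_le _ _).trans <|
      mul_le_mul (hB _) (hC' _) (norm_nonneg _) ((norm_nonneg _).trans (hB 0))
  have hlim : ∀ᵐ y ∂ν,
      Tendsto (fun r => ⨍ w in ball y r, ‖U.indicator f w - F y‖) (𝓝[>] 0) (𝓝 0) := by
    filter_upwards [hF, (show U ∈ ae ν from hν.2.2.1)] with y hy hyU
    exact hy.tendsto_average_indicator hU hyU
  have hright := (tendsto_integral_mollify_comp_mollify_apply hφ hφ2 hg hlim hA hAB
    (integrable_col hν.1 hν.2.1 i)).neg
  calc ∫ x in U, u (f x) * fderiv ℝ ψ x (EuclideanSpace.single i 1)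
      = ∫ x, u (U.indicator f x) * fderiv ℝ ψ x (EuclideanSpace.single i 1) := by
        rw [← hψ.setIntegral_mul_fderiv]
        refine setIntegral_congr_fun hU.measurableSet fun x hx => ?_
        simp only [indicator_of_mem hx]
    _ = -∫ y, ψ y * covecMul (σ y) (fderiv ℝ u (F y)) i ∂ν :=
        tendsto_nhds_unique (hleft.congr' (hball.mono fun k hk =>
          hν.integral_comp_mollify_mul_fderiv hU.measurableSet hf hu hψ (φ k) hk i)) hright

end ChainRule

section TotalVariation

lemma setLIntegral_enorm_eq_of_integral_contDiff_smul_eq {E F : Type*} [NormedAddCommGroup E]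
    [NormedSpace ℝ E] [FiniteDimensional ℝ E] [MeasurableSpace E] [BorelSpace E]
    [NormedAddCommGroup F] [NormedSpace ℝ F] [CompleteSpace F] {μ₁ μ₂ : Measure E}
    [IsFiniteMeasure μ₁] [IsFiniteMeasure μ₂] {U : Set E} (hU : IsOpen U) {g₁ g₂ : E → F}
    (hm₁ : StronglyMeasurable g₁) (hm₂ : StronglyMeasurable g₂)
    (hg₁ : Integrable g₁ μ₁) (hg₂ : Integrable g₂ μ₂)
    (h : ∀ ψ : E → ℝ, ContDiff ℝ ∞ ψ → HasCompactSupport ψ → tsupport ψ ⊆ U →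
      ∫ x, ψ x • g₁ x ∂μ₁ = ∫ x, ψ x • g₂ x ∂μ₂) :
    ∫⁻ x in U, ‖g₁ x‖ₑ ∂μ₁ = ∫⁻ x in U, ‖g₂ x‖ₑ ∂μ₂ := by
  set μ := μ₁ + μ₂
  have hμ₁ : μ₁ ≪ μ := (Measure.le_add_right le_rfl).absolutelyContinuous
  have hμ₂ : μ₂ ≪ μ := (Measure.le_add_left le_rfl).absolutelyContinuous
  set ρ₁ : E → ℝ := fun x => (μ₁.rnDeriv μ x).toReal
  set ρ₂ : E → ℝ := fun x => (μ₂.rnDeriv μ x).toReal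
  have hint₁ : Integrable (fun x => ρ₁ x • g₁ x) μ := (integrable_rnDeriv_smul_iff hμ₁).2 hg₁
  have hint₂ : Integrable (fun x => ρ₂ x • g₂ x) μ := (integrable_rnDeriv_smul_iff hμ₂).2 hg₂
  have heq : ∀ᵐ x ∂μ, x ∈ U → ρ₁ x • g₁ x - ρ₂ x • g₂ x = 0 := by
    refine hU.ae_eq_zero_of_integral_contDiff_smul_eq_zero
      ((hint₁.sub hint₂).locallyIntegrable.locallyIntegrableOn U) fun ψ hψ hψc hψU => ?_
    obtain ⟨C, hC⟩ := hψ.continuous.bounded_above_of_compact_support hψc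
    have hbdd {g : E → F} (hg : Integrable g μ) : Integrable (fun x => ψ x • g x) μ :=
      hg.bdd_smul C hψ.continuous.aestronglyMeasurable (ae_of_all _ hC)
    simp only [smul_sub]
    rw [integral_sub (hbdd hint₁) (hbdd hint₂)]
    simp only [smul_comm (ψ _), ρ₁, ρ₂]
    rw [integral_rnDeriv_smul hμ₁, integral_rnDeriv_smul hμ₂, h ψ hψ hψc hψU, sub_self]
  rw [← setLIntegral_rnDeriv_mul hμ₁ hm₁.enorm.aemeasurable hU.measurableSet,
    ← setLIntegral_rnDeriv_mul hμ₂ hm₂.enorm.aemeasurable hU.measurableSet]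
  refine setLIntegral_congr_fun_ae hU.measurableSet ?_
  filter_upwards [heq, μ₁.rnDeriv_lt_top μ, μ₂.rnDeriv_lt_top μ] with x hx h₁ h₂ hxU
  have hnorm := congrArg (‖·‖ₑ) (sub_eq_zero.1 (hx hxU))
  simpa only [ρ₁, ρ₂, enorm_smul, Real.enorm_of_nonneg ENNReal.toReal_nonneg,
    ENNReal.ofReal_toReal h₁.ne, ENNReal.ofReal_toReal h₂.ne] using hnorm

lemma isFiniteMeasure_of_measure_compl_eq_zero {α : Type*} [MeasurableSpace α] {μ : Measure α}
    {s : Set α} (hs : μ sᶜ = 0) (hfin : μ s < ⊤) : IsFiniteMeasure μ :=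
  ⟨(measure_univ_le_add_compl s).trans_lt (by rwa [hs, add_zero])⟩

variable {m n : ℕ} {Ω U : Set (En n)}

lemma IsVariationMeasure.restrict {f : En n → En m} {σ : En n → Fin m → Fin n → ℝ}
    {ν : Measure (En n)} (h : IsVariationMeasure Ω f σ ν) (hU : MeasurableSet U) (hUΩ : U ⊆ Ω) :
    IsVariationMeasure U f σ (ν.restrict U) := by
  refine ⟨h.1, ae_restrict_of_ae h.2.1, ?_, fun φ hφ j i => ?_⟩
  · rw [Measure.restrict_apply hU.compl, compl_inter_self, measure_empty]
  rw [hφ.setIntegral_mul_fderiv, hφ.setIntegral_mul, ← (hφ.mono hUΩ).setIntegral_mul_fderiv]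
  exact h.2.2.2 φ (hφ.mono hUΩ) j i

variable {v : En n → ℝ} {τ : En n → Fin n → ℝ} {ρ : Measure (En n)}

lemma IsVariationMeasureS.restrict (h : IsVariationMeasureS Ω v τ ρ) (hU : MeasurableSet U)
    (hUΩ : U ⊆ Ω) : IsVariationMeasureS U v τ (ρ.restrict U) := by
  refine ⟨h.1, ae_restrict_of_ae h.2.1, ?_, fun φ hφ i => ?_⟩
  · rw [Measure.restrict_apply hU.compl, compl_inter_self, measure_empty]
  rw [hφ.setIntegral_mul_fderiv, hφ.setIntegral_mul, ← (hφ.mono hUΩ).setIntegral_mul_fderiv]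
  exact h.2.2.2 φ (hφ.mono hUΩ) i

lemma IsVariationMeasureS.setLIntegral_enorm_eq [IsFiniteMeasure ρ]
    (h : IsVariationMeasureS U v τ ρ) (hU : IsOpen U) {ν : Measure (En n)} [IsFiniteMeasure ν]
    {c : En n → En n} (hcm : Measurable c) (hc : Integrable c ν)
    (hibp : ∀ φ, SmoothTest U φ → ∀ i,
      ∫ x in U, v x * fderiv ℝ φ x (EuclideanSpace.single i 1) = -∫ x, φ x * c x i ∂ν) :
    ∫⁻ x in U, ‖c x‖ₑ ∂ν = ρ U := by
  set T : En n → En n := fun x => WithLp.toLp 2 (τ x)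
  have hTm : Measurable T := (WithLp.measurable_toLp 2 _).comp h.1
  have hT1 : ∀ᵐ x ∂ρ, ‖T x‖ = 1 := h.2.1.mono fun x hx => by
    simpa [T, EuclideanSpace.norm_eq] using hx
  have hT : Integrable T ρ := .of_bound hTm.aestronglyMeasurable 1 (hT1.mono fun _ hx => hx.le)
  calc ∫⁻ x in U, ‖c x‖ₑ ∂ν = ∫⁻ x in U, ‖T x‖ₑ ∂ρ := by
        refine setLIntegral_enorm_eq_of_integral_contDiff_smul_eq hU hcm.stronglyMeasurable
          hTm.stronglyMeasurable hc hT fun ψ hψ hψc hψU => ?_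
        obtain ⟨C, hC⟩ := hψ.continuous.bounded_above_of_compact_support hψc
        have hψc' : Integrable (fun x => ψ x • c x) ν :=
          hc.bdd_smul C hψ.continuous.aestronglyMeasurable (ae_of_all _ hC)
        have hψT : Integrable (fun x => ψ x • T x) ρ :=
          hT.bdd_smul C hψ.continuous.aestronglyMeasurable (ae_of_all _ hC)
        ext i
        rw [eval_integral_piLp hψc'.eval_piLp, eval_integral_piLp hψT.eval_piLp]
        exact neg_injective <|
          (hibp ψ ⟨hψ, hψc, hψU⟩ i).symm.trans (h.2.2.2 ψ ⟨hψ, hψc, hψU⟩ i)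
    _ = ∫⁻ _ in U, 1 ∂ρ := lintegral_congr_ae <| ae_restrict_of_ae <| hT1.mono fun x hx => by
        simp only [← ofReal_norm, hx, ENNReal.ofReal_one]
    _ = ρ U := setLIntegral_one U

/-- The boundedness `|D(u ∘ f)|(Ω₁) ≤ K |Du|(Ω₂)` of the composition operator `u ↦ u ∘ f` from
`C_c^∞(Ω₂)` to `BV_loc(Ω₁)`; the right-hand side uses that `|Du| = |∇u| Lⁿ` for smooth `u`. -/
def HasBVCompositionBound (Ω₁ : Set (En n)) (Ω₂ : Set (En m)) (f : En n → En m) (K : ℝ) : Prop :=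
  ∀ u : En m → ℝ, SmoothTest Ω₂ u →
    ∃ νc : Measure (En n), MemBVlocs Ω₁ (fun x => u (f x)) νc ∧
      νc Ω₁ ≤ ENNReal.ofReal (K * ∫ y in Ω₂, ‖fderiv ℝ u y‖)

namespace HasBVCompositionBound

variable {V : Set (En m)} {f : En n → En m} {K : ℝ}

lemma mono_left (h : HasBVCompositionBound Ω V f K) (hU : MeasurableSet U) (hUΩ : U ⊆ Ω) :
    HasBVCompositionBound U V f K := by
  intro u hu
  obtain ⟨ρ, ⟨hint, hfin, τ, hτ⟩, hle⟩ := h u hu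
  exact ⟨ρ.restrict U, ⟨hint.mono_set hUΩ,
    fun C hC hCU => (Measure.restrict_apply_le _ _).trans_lt (hfin C hC (hCU.trans hUΩ)),
    τ, hτ.restrict hU hUΩ⟩,
    (Measure.restrict_apply_self ρ U).trans_le ((measure_mono hUΩ).trans hle)⟩

variable {σ : En n → Fin m → Fin n → ℝ} {ν : Measure (En n)} [IsFiniteMeasure ν]
  {F : En n → En m} {u : En m → ℝ}

lemma integral_norm_covecMul_fderiv_le (h : HasBVCompositionBound U V f K) (hK : 0 ≤ K)
    (hU : IsOpen U) (hf : IntegrableOn f U) (hν : IsVariationMeasure U f σ ν)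
    (hFm : Measurable F) (hF : ∀ᵐ y ∂ν, ApproxLimAt f y (F y)) (hu : SmoothTest V u) :
    ∫ y, ‖covecMul (σ y) (fderiv ℝ u (F y))‖ ∂ν ≤ K * ∫ z, ‖fderiv ℝ u z‖ := by
  obtain ⟨ρ, ⟨-, -, τ, hτ⟩, hle⟩ := h u hu
  have : IsFiniteMeasure ρ :=
    isFiniteMeasure_of_measure_compl_eq_zero hτ.2.2.1 (hle.trans_lt ENNReal.ofReal_lt_top)
  obtain ⟨C, hC⟩ := hu.exists_norm_le
  obtain ⟨C', hC'⟩ := hu.exists_norm_fderiv_le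
  have hdu : Measurable fun y => fderiv ℝ u (F y) := hu.continuous_fderiv.measurable.comp hFm
  have hint := integrable_covecMul hν.1 hν.2.1 hdu fun y => hC' (F y)
  have hρ := hτ.setLIntegral_enorm_eq hU (measurable_covecMul hν.1 hdu) hint fun φ hφ i =>
    hν.integral_comp_mul_fderiv hU hf hF (hu.1.of_le (by simp)) hC hC' hφ i
  have hV : ∫ z in V, ‖fderiv ℝ u z‖ = ∫ z, ‖fderiv ℝ u z‖ :=
    setIntegral_eq_integral_of_forall_compl_eq_zero fun z hz => by
      rw [fderiv_of_notMem_tsupport ℝ fun hz' => hz (hu.2.2 hz'), norm_zero]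
  rw [Measure.restrict_eq_self_of_ae_mem (show U ∈ ae ν from hν.2.2.1)] at hρ
  rw [integral_norm_eq_lintegral_enorm hint.aestronglyMeasurable, hρ, ← hV]
  exact ENNReal.toReal_le_of_le_ofReal
    (mul_nonneg hK (integral_nonneg fun _ => norm_nonneg _)) hle

end HasBVCompositionBound

end TotalVariation

section ModulatedWave

variable {E : Type*} [NormedAddCommGroup E] [NormedSpace ℝ E] {η : E → ℝ} {ℓ : E →L[ℝ] ℝ}
  {t : ℝ} {y : E}

/-- The amplitude `η` modulated by a wave of frequency `t` and phase `a` in the direction of `ℓ`,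
scaled so that its derivative is `η cos(t ℓ + a) ℓ` up to an error of order `t⁻¹`. -/
def modulatedWave (η : E → ℝ) (ℓ : E →L[ℝ] ℝ) (t a : ℝ) (y : E) : ℝ :=
  η y * (t⁻¹ * Real.sin (t * ℓ y + a))

lemma fderiv_modulatedWave (hη : DifferentiableAt ℝ η y) (ht : t ≠ 0) (a : ℝ) :
    fderiv ℝ (modulatedWave η ℓ t a) y =
      (η y * Real.cos (t * ℓ y + a)) • ℓ + (t⁻¹ * Real.sin (t * ℓ y + a)) • fderiv ℝ η y := by
  have hsin := ((ℓ.hasFDerivAt (x := y)).const_mul t |>.add_const a).sin.const_mul t⁻¹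
  have hosc : HasFDerivAt (modulatedWave η ℓ t a) _ y := hη.hasFDerivAt.mul hsin
  rw [hosc.fderiv]
  simp only [smul_smul]
  congr 2
  field_simp

lemma norm_fderiv_modulatedWave_le (hη : DifferentiableAt ℝ η y) (h0 : 0 ≤ η y) (ht : 0 < t)
    (a : ℝ) : ‖fderiv ℝ (modulatedWave η ℓ t a) y‖ ≤ ‖ℓ‖ * η y + t⁻¹ * ‖fderiv ℝ η y‖ := by
  rw [fderiv_modulatedWave hη ht.ne', mul_comm ‖ℓ‖]
  refine norm_add_le_of_le ?_ ?_
  · rw [norm_smul, norm_mul, Real.norm_of_nonneg h0]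
    gcongr
    exact mul_le_of_le_one_right h0 (Real.abs_cos_le_one _)
  · rw [norm_smul, norm_mul, Real.norm_of_nonneg (inv_nonneg.2 ht.le)]
    gcongr
    exact mul_le_of_le_one_right (inv_nonneg.2 ht.le) (Real.abs_sin_le_one _)

lemma one_le_abs_cos_add_abs_sin (x : ℝ) : 1 ≤ |Real.cos x| + |Real.sin x| := by
  rw [← one_le_sq_iff₀ (by positivity), add_sq, sq_abs, sq_abs]
  have := Real.cos_sq_add_sin_sq x
  nlinarith [mul_nonneg (abs_nonneg (Real.cos x)) (abs_nonneg (Real.sin x))]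

lemma mul_norm_map_le_norm_map_fderiv_modulatedWave {G : Type*} [SeminormedAddCommGroup G]
    [NormedSpace ℝ G] (p : (E →L[ℝ] ℝ) →ₗ[ℝ] G) (hη : DifferentiableAt ℝ η y) (h0 : 0 ≤ η y)
    (ht : 0 < t) :
    η y * ‖p ℓ‖ ≤ ‖p (fderiv ℝ (modulatedWave η ℓ t 0) y)‖ +
      ‖p (fderiv ℝ (modulatedWave η ℓ t (Real.pi / 2)) y)‖ + 2 * t⁻¹ * ‖p (fderiv ℝ η y)‖ := by
  have hphase (a : ℝ) : η y * |Real.cos (t * ℓ y + a)| * ‖p ℓ‖ ≤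
      ‖p (fderiv ℝ (modulatedWave η ℓ t a) y)‖ + t⁻¹ * ‖p (fderiv ℝ η y)‖ := by
    calc η y * |Real.cos (t * ℓ y + a)| * ‖p ℓ‖
        = ‖p (fderiv ℝ (modulatedWave η ℓ t a) y) -
            (t⁻¹ * Real.sin (t * ℓ y + a)) • p (fderiv ℝ η y)‖ := by
          rw [fderiv_modulatedWave hη ht.ne', map_add, p.map_smul (η y * _), p.map_smul (t⁻¹ * _),
            add_sub_cancel_right, norm_smul, norm_mul, Real.norm_of_nonneg h0, Real.norm_eq_abs]
      _ ≤ _ := by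
          refine norm_sub_le_of_le le_rfl ?_
          rw [norm_smul, norm_mul, Real.norm_of_nonneg (inv_nonneg.2 ht.le)]
          gcongr
          exact mul_le_of_le_one_right (inv_nonneg.2 ht.le) (Real.abs_sin_le_one _)
  calc η y * ‖p ℓ‖
      ≤ η y * (|Real.cos (t * ℓ y)| + |Real.sin (t * ℓ y)|) * ‖p ℓ‖ := by
        gcongr
        exact le_mul_of_one_le_right h0 (one_le_abs_cos_add_abs_sin _)
    _ = η y * |Real.cos (t * ℓ y + 0)| * ‖p ℓ‖ +
          η y * |Real.cos (t * ℓ y + Real.pi / 2)| * ‖p ℓ‖ := by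
        rw [add_zero, Real.cos_add_pi_div_two, abs_neg]
        ring
    _ ≤ _ := by linarith [hphase 0, hphase (Real.pi / 2)]

end ModulatedWave

section OscillatingTests

variable {m n : ℕ} {U : Set (En n)} {V : Set (En m)} {η : En m → ℝ} {t : ℝ}

lemma smoothTest_modulatedWave (hη : SmoothTest V η) (ℓ : En m →L[ℝ] ℝ) (t a : ℝ) :
    SmoothTest V (modulatedWave η ℓ t a) :=
  ⟨hη.1.mul (contDiff_const.mul (Real.contDiff_sin.comp
      ((contDiff_const.mul ℓ.contDiff).add contDiff_const))),
    hη.2.1.mul_right, tsupport_mul_subset_left.trans hη.2.2⟩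

lemma SmoothTest.differentiable (hη : SmoothTest V η) : Differentiable ℝ η :=
  hη.1.differentiable (by simp)

lemma SmoothTest.integrable (hη : SmoothTest V η) : Integrable η :=
  hη.1.continuous.integrable_of_hasCompactSupport hη.2.1

lemma SmoothTest.integrable_norm_fderiv (hη : SmoothTest V η) :
    Integrable fun z => ‖fderiv ℝ η z‖ :=
  (hη.continuous_fderiv.integrable_of_hasCompactSupport (hη.2.1.fderiv ℝ)).norm

lemma SmoothTest.integral_norm_fderiv_modulatedWave_le (hη : SmoothTest V η) (h0 : ∀ z, 0 ≤ η z)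
    (ht : 0 < t) (ℓ : En m →L[ℝ] ℝ) (a : ℝ) :
    ∫ z, ‖fderiv ℝ (modulatedWave η ℓ t a) z‖ ≤
      ‖ℓ‖ * (∫ z, η z) + t⁻¹ * ∫ z, ‖fderiv ℝ η z‖ := by
  rw [← integral_const_mul, ← integral_const_mul,
    ← integral_add (hη.integrable.const_mul _) (hη.integrable_norm_fderiv.const_mul _)]
  exact integral_mono (smoothTest_modulatedWave hη ℓ t a).integrable_norm_fderiv
    ((hη.integrable.const_mul _).add (hη.integrable_norm_fderiv.const_mul _))
    fun z => norm_fderiv_modulatedWave_le (hη.differentiable z) (h0 z) ht a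

namespace HasBVCompositionBound

variable {f F : En n → En m} {K : ℝ} {σ : En n → Fin m → Fin n → ℝ} {ν : Measure (En n)}
  [IsFiniteMeasure ν]

lemma integral_mul_norm_covecMul_le_add (h : HasBVCompositionBound U V f K) (hK : 0 ≤ K)
    (hU : IsOpen U) (hf : IntegrableOn f U) (hν : IsVariationMeasure U f σ ν)
    (hFm : Measurable F) (hF : ∀ᵐ y ∂ν, ApproxLimAt f y (F y)) (hη : SmoothTest V η)
    (h0 : ∀ z, 0 ≤ η z) (ℓ : En m →L[ℝ] ℝ) (ht : 0 < t) :
    ∫ y, η (F y) * ‖covecMul (σ y) ℓ‖ ∂ν ≤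
      2 * K * (‖ℓ‖ * ∫ z, η z) + t⁻¹ * (4 * K * ∫ z, ‖fderiv ℝ η z‖) := by
  set w := modulatedWave η ℓ t
  set P : (En m → ℝ) → En n → ℝ := fun u y => ‖covecMul (σ y) (fderiv ℝ u (F y))‖
  have hw (a : ℝ) : SmoothTest V (w a) := smoothTest_modulatedWave hη ℓ t a
  have hint {u : En m → ℝ} (hu : SmoothTest V u) : Integrable (P u) ν := by
    obtain ⟨C, hC⟩ := hu.exists_norm_fderiv_le
    exact (integrable_covecMul hν.1 hν.2.1 (hu.continuous_fderiv.measurable.comp hFm)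
      fun y => hC (F y)).norm
  have hbound {u : En m → ℝ} (hu : SmoothTest V u) : ∫ y, P u y ∂ν ≤ K * ∫ z, ‖fderiv ℝ u z‖ :=
    h.integral_norm_covecMul_fderiv_le hK hU hf hν hFm hF hu
  have hwK (a : ℝ) :
      ∫ y, P (w a) y ∂ν ≤ K * (‖ℓ‖ * (∫ z, η z) + t⁻¹ * ∫ z, ‖fderiv ℝ η z‖) :=
    (hbound (hw a)).trans <| mul_le_mul_of_nonneg_left
      (hη.integral_norm_fderiv_modulatedWave_le h0 ht ℓ a) hK
  have hsum : Integrable (fun y => P (w 0) y + P (w (Real.pi / 2)) y) ν :=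
    (hint (hw _)).add (hint (hw _))
  have herr : Integrable (fun y => 2 * t⁻¹ * P η y) ν := (hint hη).const_mul _
  calc ∫ y, η (F y) * ‖covecMul (σ y) ℓ‖ ∂ν
      ≤ ∫ y, P (w 0) y + P (w (Real.pi / 2)) y + 2 * t⁻¹ * P η y ∂ν :=
        integral_mono_of_nonneg (ae_of_all _ fun y => mul_nonneg (h0 _) (norm_nonneg _))
          (hsum.add herr) (ae_of_all _ fun y => mul_norm_map_le_norm_map_fderiv_modulatedWave _
            (hη.differentiable _) (h0 _) ht)
    _ = (∫ y, P (w 0) y ∂ν) + (∫ y, P (w (Real.pi / 2)) y ∂ν) + 2 * t⁻¹ * ∫ y, P η y ∂ν := by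
        rw [integral_add hsum herr, integral_add (hint (hw _)) (hint (hw _)), integral_const_mul]
    _ ≤ K * (‖ℓ‖ * (∫ z, η z) + t⁻¹ * ∫ z, ‖fderiv ℝ η z‖) +
          K * (‖ℓ‖ * (∫ z, η z) + t⁻¹ * ∫ z, ‖fderiv ℝ η z‖) +
          2 * t⁻¹ * (K * ∫ z, ‖fderiv ℝ η z‖) := by
        gcongr
        exacts [hwK _, hwK _, hbound hη]
    _ = _ := by ring

lemma integral_mul_norm_covecMul_le (h : HasBVCompositionBound U V f K) (hK : 0 ≤ K)
    (hU : IsOpen U) (hf : IntegrableOn f U) (hν : IsVariationMeasure U f σ ν)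
    (hFm : Measurable F) (hF : ∀ᵐ y ∂ν, ApproxLimAt f y (F y)) (hη : SmoothTest V η)
    (h0 : ∀ z, 0 ≤ η z) (ℓ : En m →L[ℝ] ℝ) :
    ∫ y, η (F y) * ‖covecMul (σ y) ℓ‖ ∂ν ≤ 2 * K * (‖ℓ‖ * ∫ z, η z) := by
  have hlim := ((tendsto_inv_atTop_zero (𝕜 := ℝ)).mul_const
    (4 * K * ∫ z, ‖fderiv ℝ η z‖)).const_add (2 * K * (‖ℓ‖ * ∫ z, η z))
  rw [zero_mul, add_zero] at hlim
  exact ge_of_tendsto hlim <| (eventually_gt_atTop 0).mono fun t ht =>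
    h.integral_mul_norm_covecMul_le_add hK hU hf hν hFm hF hη h0 ℓ ht

lemma integral_comp_le (h : HasBVCompositionBound U V f K) (hK : 0 ≤ K) (hU : IsOpen U)
    (hf : IntegrableOn f U) (hν : IsVariationMeasure U f σ ν) (hFm : Measurable F)
    (hF : ∀ᵐ y ∂ν, ApproxLimAt f y (F y)) (hη : SmoothTest V η) (h0 : ∀ z, 0 ≤ η z) :
    ∫ y, η (F y) ∂ν ≤ 2 * m * K * ∫ z, η z := by
  obtain ⟨C, hC⟩ := hη.exists_norm_le
  have hint (ℓ : En m →L[ℝ] ℝ) : Integrable (fun y => η (F y) * ‖covecMul (σ y) ℓ‖) ν :=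
    (integrable_covecMul hν.1 hν.2.1 measurable_const fun _ => le_rfl).norm.bdd_mul
      (hη.1.continuous.measurable.comp hFm).aestronglyMeasurable (ae_of_all _ fun y => hC (F y))
  calc ∫ y, η (F y) ∂ν
      ≤ ∫ y, ∑ j, η (F y) * ‖covecMul (σ y) (EuclideanSpace.proj j)‖ ∂ν := by
        refine integral_mono_of_nonneg (ae_of_all _ fun y => h0 _)
          (integrable_finsetSum _ fun j _ => hint _) (hν.2.1.mono fun y hy => ?_)
        simp only [← Finset.mul_sum]
        exact le_mul_of_one_le_right (h0 _) (hy.ge.trans frobNorm_le_sum_norm_covecMul_proj)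
    _ = ∑ j, ∫ y, η (F y) * ‖covecMul (σ y) (EuclideanSpace.proj j)‖ ∂ν :=
        integral_finsetSum _ fun j _ => hint _
    _ ≤ ∑ _j : Fin m, 2 * K * ∫ z, η z := by
        gcongr with j
        refine (h.integral_mul_norm_covecMul_le hK hU hf hν hFm hF hη h0 _).trans ?_
        gcongr
        refine mul_le_of_le_one_left (integral_nonneg h0) ?_
        exact ContinuousLinearMap.opNorm_le_bound _ zero_le_one fun x => by
          simpa using PiLp.norm_apply_le x j
    _ = 2 * m * K * ∫ z, η z := by
        rw [Finset.sum_const, Finset.card_univ, Fintype.card_fin, nsmul_eq_mul]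
        ring

end HasBVCompositionBound

end OscillatingTests

section Regularity

variable {n : ℕ} {A C V : Set (En n)}

lemma exists_smoothTest_eqOn_one (hC : IsCompact C) (hV : IsOpen V) (hCV : C ⊆ V) :
    ∃ η, SmoothTest V η ∧ (∀ y, η y ∈ Icc 0 1) ∧ EqOn η 1 C := by
  obtain ⟨W, hW, hCW, hWV, hWc⟩ := exists_open_between_and_isCompact_closure hC hV hCV
  obtain ⟨η, hη, hrange, hsupp, hone⟩ := exists_contMDiff_support_eq_eq_one_iff
    (n := (⊤ : ℕ∞)) (modelWithCornersSelf ℝ (En n)) hW hC.isClosed hCW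
  have htsupp : tsupport η = closure W := by rw [tsupport, hsupp]
  exact ⟨η, ⟨hη.contDiff, by rwa [HasCompactSupport, htsupp], htsupp ▸ hWV⟩,
    fun y => hrange ⟨y, rfl⟩, fun y hy => (hone y).1 hy⟩

lemma measure_le_of_lintegral_smoothTest_le {μ ν : Measure (En n)} [μ.InnerRegular]
    [ν.OuterRegular] (hV : IsOpen V)
    (h : ∀ η, SmoothTest V η → (∀ y, 0 ≤ η y) →
      ∫⁻ y, ENNReal.ofReal (η y) ∂μ ≤ ∫⁻ y, ENNReal.ofReal (η y) ∂ν)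
    (hA : MeasurableSet A) (hAV : A ⊆ V) : μ A ≤ ν A := by
  rw [hA.measure_eq_iSup_isCompact, A.measure_eq_iInf_isOpen]
  refine iSup₂_le fun C hCA => iSup_le fun hC => le_iInf₂ fun O hAO => le_iInf fun hO => ?_
  obtain ⟨η, hη, hrange, hone⟩ := exists_smoothTest_eqOn_one hC (hO.inter hV)
    (hCA.trans (subset_inter hAO hAV))
  calc μ C = ∫⁻ _ in C, 1 ∂μ := (setLIntegral_one C).symm
    _ = ∫⁻ y in C, ENNReal.ofReal (η y) ∂μ :=
        setLIntegral_congr_fun hC.measurableSet fun y hy => by simp [hone hy]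
    _ ≤ ∫⁻ y, ENNReal.ofReal (η y) ∂μ := setLIntegral_le_lintegral _ _
    _ ≤ ∫⁻ y, ENNReal.ofReal (η y) ∂ν :=
        h η (hη.mono inter_subset_right) fun y => (hrange y).1
    _ ≤ ∫⁻ y, O.indicator 1 y ∂ν := lintegral_mono fun y => by
        by_cases hy : y ∈ O
        · simpa [hy] using (hrange y).2
        · simp [image_eq_zero_of_notMem_tsupport fun hy' => hy (hη.2.2 hy').1]
    _ = ν O := lintegral_indicator_one hO.measurableSet

end Regularity

section NecessaryBound

variable {m n : ℕ} {Ω U : Set (En n)} {V A : Set (En m)} {f : En n → En m}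
  {ν : Measure (En n)} {K : ℝ}

lemma HasBVCompositionBound.measure_preimage_le [IsFiniteMeasure ν]
    (h : HasBVCompositionBound U V f K) (hK : 0 ≤ K) (hU : IsOpen U) (hV : IsOpen V)
    (hf : IntegrableOn f U) {σ : En n → Fin m → Fin n → ℝ} (hν : IsVariationMeasure U f σ ν)
    {F : En n → En m} (hFm : Measurable F) (hF : ∀ᵐ y ∂ν, ApproxLimAt f y (F y))
    (hA : MeasurableSet A) (hAV : A ⊆ V) :
    ν (F ⁻¹' A) ≤ ENNReal.ofReal (2 * m * K) * volume A := by
  have : (ENNReal.ofReal (2 * m * K) • (volume : Measure (En m))).OuterRegular :=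
    .smul _ ENNReal.ofReal_ne_top
  rw [← Measure.map_apply hFm hA, ← smul_eq_mul, ← Measure.smul_apply]
  refine measure_le_of_lintegral_smoothTest_le hV (fun η hη h0 => ?_) hA hAV
  have hηm : Measurable η := hη.1.continuous.measurable
  obtain ⟨C, hC⟩ := hη.exists_norm_le
  have hint : Integrable (fun y => η (F y)) ν :=
    .of_bound (hηm.comp hFm).aestronglyMeasurable C (ae_of_all _ fun y => hC _)
  rw [lintegral_map hηm.ennreal_ofReal hFm, lintegral_smul_measure,
    ← ofReal_integral_eq_lintegral_ofReal hint (ae_of_all _ fun y => h0 _),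
    ← ofReal_integral_eq_lintegral_ofReal hη.integrable (ae_of_all _ h0), smul_eq_mul,
    ← ENNReal.ofReal_mul (by positivity)]
  exact ENNReal.ofReal_le_ofReal (h.integral_comp_le hK hU hf hν hFm hF hη h0)

lemma exists_measurable_approxLimAt_iff (hU : IsOpen U) (hf : IntegrableOn f U)
    (hνU : ∀ᵐ y ∂ν, y ∈ U) (hlim : ∀ᵐ y ∂ν, ∃ z, ApproxLimAt f y z) :
    ∃ F : En n → En m, Measurable F ∧ ∀ᵐ y ∂ν, ∀ z, ApproxLimAt f y z ↔ F y = z := by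
  obtain ⟨φ, hφ, hφ2⟩ := exists_seq_contDiffBump_tendsto_zero (En n)
  have hg : LocallyIntegrable (U.indicator f) :=
    (hf.integrable_indicator hU.measurableSet).locallyIntegrable
  have htendsto {y : En n} {z : En m} (hy : y ∈ U) (hz : ApproxLimAt f y z) :
      Tendsto (fun k => mollify (φ k) volume (U.indicator f) y) atTop (𝓝 z) :=
    tendsto_mollify_of_tendsto_average hφ hφ2 hg (hz.tendsto_average_indicator hU hy)
      (.of_forall fun k => mem_ball_self (φ k).rOut_pos)
  obtain ⟨F, hFm, hF⟩ := measurable_limit_of_tendsto_metrizable_ae (μ := ν) (L := atTop)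
    (fun k => (contDiff_mollify (φ k) hg).continuous.measurable.aemeasurable) (by
      filter_upwards [hνU, hlim] with y hy ⟨z, hz⟩ using ⟨z, htendsto hy hz⟩)
  refine ⟨F, hFm, ?_⟩
  filter_upwards [hνU, hlim, hF] with y hy ⟨w, hw⟩ hFy z
  refine ⟨fun hz => tendsto_nhds_unique hFy (htendsto hy hz), fun hz => ?_⟩
  rwa [← hz, tendsto_nhds_unique hFy (htendsto hy hw)]

lemma HasBVCompositionBound.measure_tildePreimage_le (h : HasBVCompositionBound U V f K)
    (hK : 0 ≤ K) (hU : IsOpen U) (hV : IsOpen V) (hf : MemBV U f ν) (hjump : NoJumpPart f ν)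
    (hA : MeasurableSet A) (hAV : A ⊆ V) :
    ν (tildePreimage f A) ≤ ENNReal.ofReal (2 * m * K) * volume A := by
  obtain ⟨hint, hfin, σ, hν⟩ := hf
  have := isFiniteMeasure_of_measure_compl_eq_zero hν.2.2.1 hfin
  obtain ⟨F, hFm, hF⟩ := exists_measurable_approxLimAt_iff hU hint
    (show U ∈ ae ν from hν.2.2.1) hjump
  calc ν (tildePreimage f A) ≤ ν (F ⁻¹' A) := by
        refine measure_mono_ae ?_
        filter_upwards [hF] with y hy
        rintro ⟨z, hzA, hz⟩
        rwa [← (hy z).1 hz] at hzA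
    _ ≤ _ := h.measure_preimage_le hK hU hV hint hν hFm
        (hF.mono fun y hy => (hy _).2 rfl) hA hAV

lemma MemBVloc.memBV_restrict (h : MemBVloc Ω f ν) (hU : MeasurableSet U) {C : Set (En n)}
    (hUC : U ⊆ C) (hC : IsCompact C) (hCΩ : C ⊆ Ω) : MemBV U f (ν.restrict U) := by
  obtain ⟨hint, hfin, σ, hν⟩ := h
  refine ⟨(hint.integrableOn_compact_subset hCΩ hC).mono_set hUC, ?_, σ,
    hν.restrict hU (hUC.trans hCΩ)⟩
  rw [Measure.restrict_apply_self]
  exact (measure_mono hUC).trans_lt (hfin C hC hCΩ)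

lemma exists_monotone_isOpen_iUnion_eq {X : Type*} [TopologicalSpace X] {Ω : Set X}
    [WeaklyLocallyCompactSpace Ω] [SigmaCompactSpace Ω] (hΩ : IsOpen Ω) :
    ∃ U : ℕ → Set X, Monotone U ∧ (∀ k, IsOpen (U k)) ∧
      (∀ k, ∃ C, U k ⊆ C ∧ IsCompact C ∧ C ⊆ Ω) ∧ ⋃ k, U k = Ω := by
  set T := CompactExhaustion.choice Ω
  refine ⟨fun k => (↑) '' interior (T k),
    fun k l hkl => image_mono (interior_mono (T.subset hkl)),
    fun k => hΩ.isOpenMap_subtype_val _ isOpen_interior,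
    fun k => ⟨(↑) '' T k, image_mono interior_subset,
      (T.isCompact k).image continuous_subtype_val, Subtype.coe_image_subset Ω _⟩, ?_⟩
  have hT : ⋃ k, interior (T k) = univ :=
    iUnion_eq_univ_iff.2 fun x =>
      ⟨T.find x + 1, T.subset_interior (Nat.lt_succ_self _) (T.mem_find x)⟩
  simp only [← image_iUnion, hT, image_univ, Subtype.range_coe]

end NecessaryBound

theorem necessary_variation_bound_general {m n : ℕ} {Ω₁ : Set (En n)} {Ω₂ : Set (En m)}
    (hΩ₁ : IsOpen Ω₁) (hΩ₂ : IsOpen Ω₂) {f : En n → En m} {ν : Measure (En n)}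
    (hBV : MemBVloc Ω₁ f ν) (hjump : NoJumpPart f ν) {K : ℝ} (hK : 0 ≤ K)
    (hT : HasBVCompositionBound Ω₁ Ω₂ f K) {A : Set (En m)} (hAΩ : A ⊆ Ω₂)
    (hA : MeasurableSet A) :
    ν (tildePreimage f A) ≤ ENNReal.ofReal (2 * m * K) * volume A := by
  have : LocallyCompactSpace Ω₁ := hΩ₁.locallyCompactSpace
  obtain ⟨U, hmono, hUo, hUC, hUΩ⟩ := exists_monotone_isOpen_iUnion_eq hΩ₁
  have hνΩ : ν Ω₁ᶜ = 0 := hBV.2.2.choose_spec.2.2.1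
  have hinter : Monotone fun k => tildePreimage f A ∩ U k :=
    fun k l hkl => inter_subset_inter_right _ (hmono hkl)
  calc ν (tildePreimage f A) = ⨆ k, ν (tildePreimage f A ∩ U k) := by
        rw [← hinter.measure_iUnion, ← inter_iUnion, hUΩ, measure_inter_conull hνΩ]
    _ ≤ _ := iSup_le fun k => by
        obtain ⟨C, hC, hCc, hCΩ⟩ := hUC k
        rw [← Measure.restrict_apply' (hUo k).measurableSet]
        exact (hT.mono_left (hUo k).measurableSet (hC.trans hCΩ)).measure_tildePreimage_le hK
          (hUo k) hΩ₂ (hBV.memBV_restrict (hUo k).measurableSet hC hCc hCΩ)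
          (Measure.restrict_le_self.absolutelyContinuous hjump) hA hAΩ

/-- **Theorem (Statement 15).** Let `f ∈ BV_loc(Ω₁, Ω₂)` have no jump part, and suppose
`T_f(u) = u ∘ f` maps `C_c^∞(Ω₂)` into `BV_loc(Ω₁)` with
`|D(u∘f)|(Ω₁) ≤ K·|Du|(Ω₂)` for all `u ∈ C_c^∞(Ω₂)`.  Then
`|Df|(f̃⁻¹(A)) ≤ 16·n·K·Lⁿ(A)` for all Borel `A ⊆ Ω₂`. -/
theorem necessary_variation_bound {n : ℕ}
    (Ω₁ Ω₂ : Set (En n)) (hΩ₁ : IsOpen Ω₁) (hΩ₂ : IsOpen Ω₂)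
    (f : En n → En n) (hmaps : MapsTo f Ω₁ Ω₂)
    (νf : Measure (En n)) (hBV : MemBVloc Ω₁ f νf) (hjump : NoJumpPart f νf)
    (K : ℝ) (hK : 0 ≤ K)
    (hT : ∀ u : En n → ℝ, SmoothTest Ω₂ u →
      ∃ νc : Measure (En n), MemBVlocs Ω₁ (fun x => u (f x)) νc ∧
        νc Ω₁ ≤ ENNReal.ofReal (K * ∫ y in Ω₂, ‖fderiv ℝ u y‖ ∂volume)) :
    ∀ A : Set (En n), A ⊆ Ω₂ → MeasurableSet A →
      νf (tildePreimage f A) ≤ ENNReal.ofReal (16 * n * K) * volume A := fun A hAΩ hA =>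
  (necessary_variation_bound_general hΩ₁ hΩ₂ hBV hjump hK hT hAΩ hA).trans (by gcongr; norm_num)
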